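/- Let F be a bounded standard set-valued map, T > 0, and for δ ≥ 0 define Λ^δ : C([0,T], ℝ^m) ⇒ C([0,T], ℝ^m) by: y ∈ Λ^δ(z) iff there is an integrable h : [0,T] → ℝ^m with h(u) ∈ F^δ(z(u)) for all u ∈ [0,T] and y(τ) = z(0) + ∫_0^τ h(u) du for all τ ∈ [0,T] (with F^0 = F and Λ = Λ^0). Let (z_n) converge to z uniformly on [0,T] and let (δ_n) be a positive sequence converging to 0. Then limsup_n Λ^{δ_n}(z_n) ⊂ Λ(z): if y_n ∈ Λ^{δ_n}(z_n) for all n and y_n → y uniformly, then y ∈ Λ(z). -/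

import Mathlib

open MeasureTheory Filter Topology Metric Set Pointwise

noncomputable section

/-- `ℝ^m` with the Euclidean norm. -/
abbrev Euc (m : ℕ) := EuclideanSpace ℝ (Fin m)

/-- A standard set-valued map `F : ℝ^m ⇒ ℝ^m`: nonempty compact convex values,
closed graph, and linear growth. -/
def IsStandardSVM {m : ℕ} (F : Euc m → Set (Euc m)) : Prop :=
  (∀ x, (F x).Nonempty ∧ IsCompact (F x) ∧ Convex ℝ (F x)) ∧
  IsClosed {p : Euc m × Euc m | p.2 ∈ F p.1} ∧
  ∃ c > 0, ∀ x, ∀ z ∈ F x, ‖z‖ ≤ c * (1 + ‖x‖)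

/-- A solution of the differential inclusion `dx/dt ∈ F x`: an absolutely continuous
curve `z : ℝ → ℝ^m` (written as the integral of a locally integrable derivative `h`)
with `h t ∈ F (z t)` for almost every `t`. -/
def IsSolution {m : ℕ} (F : Euc m → Set (Euc m)) (z : ℝ → Euc m) : Prop :=
  Continuous z ∧ ∃ h : ℝ → Euc m,
    (∀ a b : ℝ, IntervalIntegrable h volume a b) ∧
    (∀ᵐ t ∂volume, h t ∈ F (z t)) ∧
    ∀ t : ℝ, z t = z 0 + ∫ u in (0:ℝ)..t, h u

/-- `Φ_t(x)`: the set of points reached at time `t` by solutions starting at `x`. -/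
def PhiT {m : ℕ} (F : Euc m → Set (Euc m)) (t : ℝ) (x : Euc m) : Set (Euc m) :=
  {y | ∃ z : ℝ → Euc m, IsSolution F z ∧ z 0 = x ∧ z t = y}

/-- `ω_Φ(x) = ⋂_{t ≥ 0} closure (Φ_{[t,∞)}(x))`. -/
def omegaLimitSV {m : ℕ} (F : Euc m → Set (Euc m)) (x : Euc m) : Set (Euc m) :=
  ⋂ t ∈ Ici (0:ℝ), closure {y | ∃ s ≥ t, y ∈ PhiT F s x}

/-- An attractor for the set-valued dynamical system induced by `F`: a nonempty,
compact, invariant set admitting a neighborhood `U` with `Φ_t(U) ⊆ N^ε(A)` for all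
`t` large enough. -/
def IsAttractorSV {m : ℕ} (F : Euc m → Set (Euc m)) (A : Set (Euc m)) : Prop :=
  A.Nonempty ∧ IsCompact A ∧
  (∀ x ∈ A, ∃ z : ℝ → Euc m, IsSolution F z ∧ z 0 = x ∧ Set.range z ⊆ A) ∧
  ∃ U : Set (Euc m), IsOpen U ∧ A ⊆ U ∧
    ∀ ε > 0, ∃ tε > 0, ∀ t ≥ tε, ∀ x ∈ U, PhiT F t x ⊆ Metric.thickening ε A

/-- The basin of attraction `B(A) = {x | ω_Φ(x) ⊆ A}`. -/
def basinSV {m : ℕ} (F : Euc m → Set (Euc m)) (A : Set (Euc m)) : Set (Euc m) :=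
  {x | omegaLimitSV F x ⊆ A}

/-- The limit set `L(X) = ⋂_{t ≥ 0} closure {X s : s ≥ t}` of a path. -/
def limitSet {m : ℕ} (X : ℝ → Euc m) : Set (Euc m) :=
  ⋂ t ∈ Ici (0:ℝ), closure {y | ∃ s ≥ t, X s = y}

/-- `inf_{z ∈ S_Φ} sup_{u ∈ [0,T]} ‖z u - Y u‖`. -/
def distToSol {m : ℕ} (F : Euc m → Set (Euc m)) (Y : ℝ → Euc m) (T : ℝ) : ℝ :=
  sInf {d | ∃ z : ℝ → Euc m, IsSolution F z ∧ d = ⨆ u : Icc (0:ℝ) T, ‖z u - Y u‖}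

/-- Asymptotic pseudotrajectory of the set-valued dynamical system induced by `F`. -/
def IsAPT {m : ℕ} (F : Euc m → Set (Euc m)) (X : ℝ → Euc m) : Prop :=
  ∀ T > 0, Tendsto (fun t => distToSol F (fun u => X (t + u)) T) atTop (𝓝 0)

/-- A point `p` is attainable by the process `X`: for every `t > 0` and every
neighborhood `U` of `p`, `P(∃ s ≥ t, X s ∈ U) > 0`. -/
def Attainable {m : ℕ} {Ω : Type*} [MeasurableSpace Ω] (μ : Measure Ω)
    (X : ℝ → Ω → Euc m) (p : Euc m) : Prop :=
  ∀ t > 0, ∀ U ∈ 𝓝 p, 0 < μ {ω | ∃ s ≥ t, X s ω ∈ U}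

/-- `τ_n = γ_1 + ⋯ + γ_n`. -/
def tauOf (γ : ℕ → ℝ) (n : ℕ) : ℝ := ∑ i ∈ Finset.range n, γ (i + 1)

/-- `m(t) = sup {j | τ_j ≤ t}`. -/
def mIdx (γ : ℕ → ℝ) (t : ℝ) : ℕ := sSup {j | tauOf γ j ≤ t}

/-- Hypothesis H1: there is `w t α T` decreasing to `0` in `t` dominating the
conditional probability that `sup_{s ≥ t} inf_{z ∈ S_Φ} sup_{u ∈ [0,T]} ‖z u − X (s+u)‖ ≥ α`. -/
def HypH1 {m : ℕ} {Ω : Type*} [MeasurableSpace Ω] (μ : Measure Ω)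
    (𝓕 : ℝ → MeasurableSpace Ω) (F : Euc m → Set (Euc m)) (X : ℝ → Ω → Euc m) : Prop :=
  ∃ w : ℝ → ℝ → ℝ → ℝ,
    (∀ α > 0, ∀ T > 0, Antitone (fun t => w t α T) ∧ Tendsto (fun t => w t α T) atTop (𝓝 0)) ∧
    ∀ α > 0, ∀ T > 0, ∀ t : ℝ, ∀ᵐ ω ∂μ,
      (μ[Set.indicator {ω' | α ≤ ⨆ s : Ici t, distToSol F (fun u => X ((s : ℝ) + u) ω') T}
          (fun _ => (1:ℝ)) | 𝓕 t]) ω ≤ w t α T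

/-- `F^δ(x) = {y | ∃ z ∈ B(x,δ), dist(y, F z) < δ}`, with the convention `F^0 = F`. -/
def Fdelta {m : ℕ} (F : Euc m → Set (Euc m)) (δ : ℝ) (x : Euc m) : Set (Euc m) :=
  if δ = 0 then F x
  else {y | ∃ z : Euc m, dist z x < δ ∧ Metric.infDist y (F z) < δ}

/-- A `(δ(·), V(·))`-perturbed solution of `dx/dt ∈ F x`. -/
def IsPerturbedSolution {m : ℕ} (F : Euc m → Set (Euc m)) (δ : ℝ → ℝ) (V : ℝ → Euc m)
    (y : ℝ → Euc m) : Prop :=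
  Continuous y ∧ (∀ t > 0, 0 < δ t) ∧ Antitone δ ∧ Tendsto δ atTop (𝓝 0) ∧
  (∀ a b : ℝ, IntervalIntegrable V volume a b) ∧
  (∀ T > 0, Tendsto (fun t => ⨆ u : Icc (0:ℝ) T, ‖∫ r in t..(t + (u : ℝ)), V r‖)
    atTop (𝓝 0)) ∧
  ∃ h : ℝ → Euc m, (∀ a b : ℝ, IntervalIntegrable h volume a b) ∧
    (∀ᵐ t ∂(volume.restrict (Ioi (0:ℝ))), h t - V t ∈ Fdelta F (δ t) (y t)) ∧
    ∀ t ∈ Ici (0:ℝ), y t = y 0 + ∫ u in (0:ℝ)..t, h u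

/-- `Δ(n,T) = sup_{n < k ≤ m(τ_n + T)} ‖∑_{i=n}^{k-1} γ_{i+1} U_{i+1}‖`. -/
def DeltaNT {m : ℕ} {Ω : Type*} (γ : ℕ → ℝ) (U : ℕ → Ω → Euc m) (T : ℝ) (n : ℕ)
    (ω : Ω) : ℝ :=
  ⨆ k : {k : ℕ // n < k ∧ k ≤ mIdx γ (tauOf γ n + T)},
    ‖∑ i ∈ Finset.Ico n (k : ℕ), γ (i + 1) • U (i + 1) ω‖

/-- Condition (bruit2): the conditional probability that `sup_{m ≥ n} Δ(m,T) ≥ ε` is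
dominated by some `w n ε T` decreasing to `0` in `n`. -/
def Bruit2 {m : ℕ} {Ω : Type*} [MeasurableSpace Ω] (μ : Measure Ω)
    (𝓕 : ℕ → MeasurableSpace Ω) (γ : ℕ → ℝ) (U : ℕ → Ω → Euc m) : Prop :=
  ∃ w : ℕ → ℝ → ℝ → ℝ,
    (∀ ε > 0, ∀ T > 0, Antitone (fun n => w n ε T) ∧ Tendsto (fun n => w n ε T) atTop (𝓝 0)) ∧
    ∀ ε > 0, ∀ T > 0, ∀ n : ℕ, ∀ᵐ ω ∂μ,
      (μ[Set.indicator {ω' | ε ≤ ⨆ k : Ici n, DeltaNT γ U T (k : ℕ) ω'}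
          (fun _ => (1:ℝ)) | 𝓕 n]) ω ≤ w n ε T

/-- Topological `limsup` of a sequence of sets: points whose every neighborhood
meets infinitely many of the sets. -/
def setLimsup {X : Type*} [TopologicalSpace X] (A : ℕ → Set X) : Set X :=
  {y | ∀ U ∈ 𝓝 y, {n | (U ∩ A n).Nonempty}.Infinite}

/-- The operator `Λ^δ` on continuous paths `[0,T] → ℝ^m` (with `Λ^0 = Λ`). -/
def LambdaD {m : ℕ} (F : Euc m → Set (Euc m)) (T : ℝ) (hT : 0 ≤ T) (δ : ℝ)
    (z : C(Icc (0:ℝ) T, Euc m)) : Set C(Icc (0:ℝ) T, Euc m) :=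
  {y | ∃ h : ℝ → Euc m, IntervalIntegrable h volume 0 T ∧
    (∀ u : Icc (0:ℝ) T, h u ∈ Fdelta F δ (z u)) ∧
    ∀ τ : Icc (0:ℝ) T, y τ = z ⟨0, Set.left_mem_Icc.mpr hT⟩ + ∫ u in (0:ℝ)..(τ : ℝ), h u}

/-- `Φ^T(M) = closure (⋃_{s ∈ [0,T]} Φ_s(M))`. -/
def PhiTM {m : ℕ} (F : Euc m → Set (Euc m)) (T : ℝ) (M : Set (Euc m)) : Set (Euc m) :=
  closure (⋃ s ∈ Icc (0:ℝ) T, ⋃ x ∈ M, PhiT F s x)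

/-- `‖F‖ = sup_{x ∈ Φ^T(M)} sup_{y ∈ F x} ‖y‖`. -/
def normF {m : ℕ} (F : Euc m → Set (Euc m)) (T : ℝ) (M : Set (Euc m)) : ℝ :=
  sSup {r | ∃ x ∈ PhiTM F T M, ∃ y ∈ F x, r = ‖y‖}

/-- `K_C`: Lipschitz paths with constant `‖F‖ + C + 1` starting in `M`. -/
def KC {m : ℕ} (F : Euc m → Set (Euc m)) (T : ℝ) (hT : 0 ≤ T) (M : Set (Euc m))
    (C : ℝ) : Set C(Icc (0:ℝ) T, Euc m) :=
  {y | (∀ u v : Icc (0:ℝ) T, ‖y u - y v‖ ≤ (normF F T M + C + 1) * |(u : ℝ) - (v : ℝ)|) ∧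
    y ⟨0, Set.left_mem_Icc.mpr hT⟩ ∈ M}

/-- `S_{[0,T]}`: restrictions to `[0,T]` of solutions starting in `M`. -/
def SolRestrict {m : ℕ} (F : Euc m → Set (Euc m)) (T : ℝ) (M : Set (Euc m)) :
    Set C(Icc (0:ℝ) T, Euc m) :=
  {y | ∃ z : ℝ → Euc m, IsSolution F z ∧ z 0 ∈ M ∧ ∀ u : Icc (0:ℝ) T, y u = z u}

/-- A generalised stochastic approximation process relative to `F`. -/
def IsGSAP {m : ℕ} {Ω : Type*} [MeasurableSpace Ω] (μ : Measure Ω)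
    (F : Euc m → Set (Euc m)) (M : Set (Euc m)) (γ : ℕ → ℝ)
    (Fn : ℕ → Euc m → Set (Euc m)) (U : ℕ → Ω → Euc m) (x : ℕ → Ω → Euc m) : Prop :=
  (∀ n, 0 < γ n) ∧
  Tendsto (fun n => ∑ i ∈ Finset.range n, γ (i + 1)) atTop atTop ∧
  Tendsto γ atTop (𝓝 0) ∧
  (∃ C, ∀ n ω, ‖U n ω‖ ≤ C) ∧
  (∀ n ω, x (n + 1) ω - x n ω - γ (n + 1) • U (n + 1) ω ∈ γ (n + 1) • Fn n (x n ω)) ∧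
  (∀ T > 0, ∀ᵐ ω ∂μ, Tendsto
    (fun n => ⨆ k : {k : ℕ // ∑ i ∈ Finset.Ico n k, γ i ≤ T},
      ‖∑ i ∈ Finset.Ico n (k : ℕ), γ (i + 1) • U (i + 1) ω‖) atTop (𝓝 0)) ∧
  (∀ n ω, x n ω ∈ M) ∧
  (∀ δ > 0, ∃ n₀ : ℕ, ∀ n ≥ n₀, ∀ ω, Fn n (x n ω) ⊆ Fdelta F δ (x n ω))

/-!
Differences of the limit `y` are limits of integrals of the derivatives `h_n`, which stay bounded;
hence `y` is Lipschitz and differentiable almost everywhere. By upper hemicontinuity, near a time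
`t` and for large `n` the values `h_n u` lie in any prescribed closed convex neighbourhood of
`F (z t)`. So do their averages over short intervals, which converge to the slopes of `y`, and
therefore `y' t ∈ F (z t)` wherever `y` is differentiable. Redefining `y'` on a null set gives an
integrable selection of `F ∘ z` whose primitive is `y`.
-/

theorem exists_seq_tendsto_of_mem_setLimsup {X : Type*} [TopologicalSpace X]
    [FirstCountableTopology X] {A : ℕ → Set X} {y : X} (hy : y ∈ setLimsup A) :
    ∃ (φ : ℕ → ℕ) (w : ℕ → X), Tendsto φ atTop atTop ∧ Tendsto w atTop (𝓝 y) ∧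
      ∀ k, w k ∈ A (φ k) := by
  have hfreq : ∃ᶠ p : ℕ × X in atTop ×ˢ 𝓝 y, p.2 ∈ A p.1 := by
    intro hev
    obtain ⟨P, hP, Q, hQ, hPQ⟩ := eventually_prod_iff.1 hev
    obtain ⟨n, ⟨x, hxQ, hxA⟩, hnP⟩ :=
      ((Nat.frequently_atTop_iff_infinite.2 (hy _ hQ)).and_eventually hP).exists
    exact hPQ hnP hxQ hxA
  obtain ⟨p, hp, hpA⟩ := exists_seq_forall_of_frequently hfreq
  exact ⟨_, _, hp.fst, hp.snd, hpA⟩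

section LipschitzFTC

variable {E : Type*} [NormedAddCommGroup E] [NormedSpace ℝ E]
  {f : ℝ → E} {K : NNReal} {a b : ℝ}

theorem intervalIntegrable_deriv_of_lipschitzOnWith [CompleteSpace E]
    (hf : LipschitzOnWith K f (uIcc a b)) :
    IntervalIntegrable (deriv f) volume a b := by
  have hbound : ∀ᵐ u ∂volume.restrict (uIoc a b), ‖deriv f u‖ ≤ K := by
    rw [uIoc, ← Measure.restrict_congr_set Ioo_ae_eq_Ioc]
    exact ae_restrict_of_forall_mem measurableSet_Ioo fun u hu ↦
      norm_deriv_le_of_lipschitzOn (Icc_mem_nhds hu.1 hu.2) hf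
  rw [intervalIntegrable_iff]
  exact Measure.integrableOn_of_bounded measure_Ioc_lt_top.ne
    (stronglyMeasurable_deriv f).aestronglyMeasurable hbound

variable [FiniteDimensional ℝ E]

theorem ae_differentiableAt_of_lipschitzOnWith (hf : LipschitzOnWith K f (uIcc a b)) :
    ∀ᵐ u ∂volume.restrict (uIoc a b), DifferentiableAt ℝ f u := by
  rw [uIoc, ← Measure.restrict_congr_set Ioo_ae_eq_Ioc]
  filter_upwards [ae_restrict_mem measurableSet_Ioo,
    ae_restrict_of_ae hf.ae_differentiableWithinAt_of_mem_real] with u hu hdiff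
  exact (hdiff (Ioo_subset_Icc_self hu)).differentiableAt (Icc_mem_nhds hu.1 hu.2)

theorem integral_deriv_eq_sub_of_lipschitzOnWith (hf : LipschitzOnWith K f (uIcc a b)) :
    ∫ u in a..b, deriv f u = f b - f a := by
  refine (SeparatingDual.eq_iff_forall_dual_eq (R := ℝ)).2 fun L ↦ ?_
  have hLf : LipschitzOnWith (‖L‖₊ * K) (L ∘ f) (uIcc a b) := L.lipschitz.comp_lipschitzOnWith hf
  calc L (∫ u in a..b, deriv f u) = ∫ u in a..b, L (deriv f u) :=
        (L.intervalIntegral_comp_comm (intervalIntegrable_deriv_of_lipschitzOnWith hf)).symm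
    _ = ∫ u in a..b, deriv (L ∘ f) u := by
        refine intervalIntegral.integral_congr_ae_restrict ?_
        filter_upwards [ae_differentiableAt_of_lipschitzOnWith hf] with u hu
        exact (L.hasFDerivAt.comp_hasDerivAt u hu.hasDerivAt).deriv.symm
    _ = L (f b - f a) := by
        rw [hLf.absolutelyContinuousOnInterval.integral_deriv_eq_sub, map_sub, Function.comp_apply,
          Function.comp_apply]

end LipschitzFTC

theorem inv_smul_integral_mem_of_convex {E : Type*} [NormedAddCommGroup E] [NormedSpace ℝ E]
    [CompleteSpace E] {C : Set E} (hconv : Convex ℝ C) (hclosed : IsClosed C) {a b : ℝ}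
    (hab : a < b) {h : ℝ → E} (hi : IntervalIntegrable h volume a b)
    (hmem : ∀ u ∈ Ioc a b, h u ∈ C) : (b - a)⁻¹ • ∫ u in a..b, h u ∈ C := by
  rw [← interval_average_eq, uIoc_of_le hab.le]
  exact hconv.set_average_mem hclosed (by simp [hab]) measure_Ioc_lt_top.ne
    (ae_restrict_of_forall_mem measurableSet_Ioc hmem) hi.1

theorem exists_eventuallyEq_forall_mem {α E : Type*} {l : Filter α} {s : Set α}
    {G : α → Set E} (hne : ∀ u ∈ s, (G u).Nonempty) {f : α → E} (hf : ∀ᶠ u in l, f u ∈ G u) :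
    ∃ g : α → E, f =ᶠ[l] g ∧ ∀ u ∈ s, g u ∈ G u := by
  have hsel (u : α) : ∃ y, (f u ∈ G u → f u = y) ∧ (u ∈ s → y ∈ G u) := by
    by_cases hfu : f u ∈ G u
    · exact ⟨f u, fun _ ↦ rfl, fun _ ↦ hfu⟩
    by_cases hu : u ∈ s
    · exact ⟨(hne u hu).some, fun h ↦ absurd h hfu, fun _ ↦ (hne u hu).some_mem⟩
    · exact ⟨f u, fun _ ↦ rfl, fun h ↦ absurd h hu⟩
  choose g hfg hgG using hsel
  exact ⟨g, hf.mono hfg, hgG⟩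

theorem exists_eventually_forall_norm_le {ι X E : Type*} [TopologicalSpace X]
    [SeminormedAddGroup E] {l : Filter ι} {h : ι → X → E} {s : Set X} (hs : IsCompact s)
    (hloc : ∀ t ∈ s, ∃ B : ℝ, ∀ᶠ p : ι × X in l ×ˢ 𝓝[s] t, ‖h p.1 p.2‖ ≤ B) :
    ∃ B : ℝ, ∀ᶠ k in l, ∀ u ∈ s, ‖h k u‖ ≤ B := by
  refine hs.induction_on (p := fun s' ↦ ∃ B : ℝ, ∀ᶠ k in l, ∀ u ∈ s', ‖h k u‖ ≤ B)
    ⟨0, by simp⟩ ?mono ?union fun t ht ↦ ?nhds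
  case mono =>
    rintro s₁ s₂ hsub ⟨B, hB⟩
    exact ⟨B, hB.mono fun k hk u hu ↦ hk u (hsub hu)⟩
  case union =>
    rintro s₁ s₂ ⟨B₁, hB₁⟩ ⟨B₂, hB₂⟩
    refine ⟨max B₁ B₂, ?_⟩
    filter_upwards [hB₁, hB₂] with k hk₁ hk₂ u hu
    exact hu.elim (fun hu ↦ (hk₁ u hu).trans (le_max_left _ _))
      fun hu ↦ (hk₂ u hu).trans (le_max_right _ _)
  case nhds =>
    obtain ⟨B, hB⟩ := hloc t ht
    obtain ⟨P, hP, Q, hQ, hPQ⟩ := eventually_prod_iff.1 hB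
    exact ⟨{u | Q u}, hQ, B, hP.mono fun k hk u hu ↦ hPQ hk hu⟩

section LimitOfPrimitives

variable {ι E : Type*} [NormedAddCommGroup E] [NormedSpace ℝ E] {l : Filter ι}
  {h : ι → ℝ → E} {Y : ℝ → E} {a b : ℝ}

theorem tendsto_integral_sub_of_tendsto_primitive
    (hi : ∀ k, IntervalIntegrable (h k) volume a b)
    (hY : ∀ τ ∈ Icc a b, Tendsto (fun k ↦ ∫ u in a..τ, h k u) l (𝓝 (Y τ)))
    {s t : ℝ} (hs : s ∈ Icc a b) (ht : t ∈ Icc a b) :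
    Tendsto (fun k ↦ ∫ u in s..t, h k u) l (𝓝 (Y t - Y s)) := by
  have hi' (k : ι) {τ : ℝ} (hτ : τ ∈ Icc a b) : IntervalIntegrable (h k) volume a τ :=
    (hi k).mono_set (uIcc_subset_uIcc_left (Icc_subset_uIcc hτ))
  exact ((hY t ht).sub (hY s hs)).congr fun k ↦
    intervalIntegral.integral_interval_sub_left (hi' k ht) (hi' k hs)

theorem lipschitzOnWith_of_tendsto_primitive [l.NeBot]
    (hi : ∀ k, IntervalIntegrable (h k) volume a b)
    (hY : ∀ τ ∈ Icc a b, Tendsto (fun k ↦ ∫ u in a..τ, h k u) l (𝓝 (Y τ)))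
    {B : NNReal} (hB : ∀ᶠ k in l, ∀ u ∈ Icc a b, ‖h k u‖ ≤ B) :
    LipschitzOnWith B Y (Icc a b) := by
  refine LipschitzOnWith.of_dist_le_mul fun t ht s hs ↦ ?_
  rw [dist_eq_norm, Real.dist_eq]
  refine le_of_tendsto (tendsto_integral_sub_of_tendsto_primitive hi hY hs ht).norm ?_
  filter_upwards [hB] with k hk
  exact intervalIntegral.norm_integral_le_of_norm_le_const fun u hu ↦
    hk u (uIcc_subset_Icc hs ht (uIoc_subset_uIcc hu))

theorem slope_mem_of_tendsto_primitive [CompleteSpace E] [l.NeBot]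
    (hi : ∀ k, IntervalIntegrable (h k) volume a b)
    (hY : ∀ τ ∈ Icc a b, Tendsto (fun k ↦ ∫ u in a..τ, h k u) l (𝓝 (Y τ)))
    {C : Set E} (hconv : Convex ℝ C) (hclosed : IsClosed C)
    {s t : ℝ} (hs : s ∈ Icc a b) (ht : t ∈ Icc a b) (hst : s < t)
    (hC : ∀ᶠ k in l, ∀ u ∈ Ioc s t, h k u ∈ C) : slope Y s t ∈ C := by
  have hlim := (tendsto_integral_sub_of_tendsto_primitive hi hY hs ht).const_smul (t - s)⁻¹
  refine hclosed.mem_of_tendsto hlim (hC.mono fun k hk ↦ ?_)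
  exact inv_smul_integral_mem_of_convex hconv hclosed hst
    ((hi k).mono_set (uIcc_subset_uIcc (Icc_subset_uIcc hs) (Icc_subset_uIcc ht))) hk

theorem deriv_mem_of_tendsto_primitive [CompleteSpace E] [l.NeBot]
    (hi : ∀ k, IntervalIntegrable (h k) volume a b)
    (hY : ∀ τ ∈ Icc a b, Tendsto (fun k ↦ ∫ u in a..τ, h k u) l (𝓝 (Y τ)))
    {t : ℝ} (ht : t ∈ Ico a b) {C : Set E} (hconv : Convex ℝ C) (hclosed : IsClosed C)
    (hC : Tendsto (Function.uncurry h) (l ×ˢ 𝓝[Icc a b] t) (𝓝ˢ C))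
    (hdiff : DifferentiableAt ℝ Y t) : deriv Y t ∈ C := by
  rw [← hclosed.closure_eq, closure_eq_iInter_cthickening, mem_iInter₂]
  intro ε hε
  have hslope : Tendsto (slope Y t) (𝓝[>] t) (𝓝 (deriv Y t)) :=
    (hasDerivWithinAt_iff_tendsto_slope' self_notMem_Ioi).1 hdiff.hasDerivAt.hasDerivWithinAt
  refine isClosed_cthickening.mem_of_tendsto hslope ?_
  obtain ⟨P, hP, Q, hQ, hPQ⟩ := eventually_prod_iff.1
    (hC.eventually_mem (cthickening_mem_nhdsSet C hε))
  have hQ' : {u | Q u} ∈ 𝓝[≥] t := nhdsWithin_le_of_mem (Icc_mem_nhdsGE_of_mem ht) hQ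
  obtain ⟨r, hr, hrQ⟩ := mem_nhdsGE_iff_exists_Icc_subset.1 hQ'
  filter_upwards [Ioo_mem_nhdsGT (lt_min hr ht.2)] with s hs
  obtain ⟨hsr, hsb⟩ := lt_min_iff.1 hs.2
  refine slope_mem_of_tendsto_primitive hi hY (hconv.cthickening ε) isClosed_cthickening
    (Ico_subset_Icc_self ht) ⟨ht.1.trans hs.1.le, hsb.le⟩ hs.1 ?_
  exact hP.mono fun k hk u hu ↦ hPQ hk (hrQ ⟨hu.1.le, hu.2.trans hsr.le⟩)

theorem exists_lipschitzOnWith_of_tendsto_primitive [l.NeBot] {G : ℝ → Set E}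
    (hi : ∀ k, IntervalIntegrable (h k) volume a b)
    (hY : ∀ τ ∈ Icc a b, Tendsto (fun k ↦ ∫ u in a..τ, h k u) l (𝓝 (Y τ)))
    (hbdd : ∀ t ∈ Icc a b, Bornology.IsBounded (G t))
    (hG : ∀ t ∈ Icc a b, Tendsto (Function.uncurry h) (l ×ˢ 𝓝[Icc a b] t) (𝓝ˢ (G t))) :
    ∃ K : NNReal, LipschitzOnWith K Y (Icc a b) := by
  obtain ⟨B, hB⟩ : ∃ B : ℝ, ∀ᶠ k in l, ∀ u ∈ Icc a b, ‖h k u‖ ≤ B := by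
    refine exists_eventually_forall_norm_le isCompact_Icc fun t ht ↦ ?_
    obtain ⟨B, hB⟩ := (hbdd t ht).subset_ball 0
    exact ⟨B, ((hG t ht).eventually_mem (isOpen_ball.mem_nhdsSet.2 hB)).mono fun p hp ↦
      (mem_ball_zero_iff.1 hp).le⟩
  exact ⟨B.toNNReal, lipschitzOnWith_of_tendsto_primitive hi hY
    (hB.mono fun k hk u hu ↦ (hk u hu).trans (Real.le_coe_toNNReal B))⟩

theorem exists_selection_eq_integral_of_tendsto_primitive [FiniteDimensional ℝ E] [l.NeBot]
    (hab : a ≤ b) {G : ℝ → Set E} (hne : ∀ t ∈ Icc a b, (G t).Nonempty)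
    (hcompact : ∀ t ∈ Icc a b, IsCompact (G t)) (hconv : ∀ t ∈ Icc a b, Convex ℝ (G t))
    (hi : ∀ k, IntervalIntegrable (h k) volume a b)
    (hY : ∀ τ ∈ Icc a b, Tendsto (fun k ↦ ∫ u in a..τ, h k u) l (𝓝 (Y τ)))
    (hG : ∀ t ∈ Icc a b, Tendsto (Function.uncurry h) (l ×ˢ 𝓝[Icc a b] t) (𝓝ˢ (G t))) :
    ∃ g : ℝ → E, IntervalIntegrable g volume a b ∧ (∀ u ∈ Icc a b, g u ∈ G u) ∧
      ∀ τ ∈ Icc a b, Y τ = ∫ u in a..τ, g u := by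
  have ha : a ∈ Icc a b := left_mem_Icc.2 hab
  have hb : b ∈ Icc a b := right_mem_Icc.2 hab
  obtain ⟨K, hK⟩ := exists_lipschitzOnWith_of_tendsto_primitive hi hY
    (fun t ht ↦ (hcompact t ht).isBounded) hG
  have hlip {τ : ℝ} (hτ : τ ∈ Icc a b) : LipschitzOnWith K Y (uIcc a τ) :=
    hK.mono (uIcc_subset_Icc ha hτ)
  have hderiv : ∀ᵐ t ∂volume.restrict (uIoc a b), deriv Y t ∈ G t := by
    have hdiff := ae_differentiableAt_of_lipschitzOnWith (hlip hb)
    rw [uIoc_of_le hab, ← Measure.restrict_congr_set Ioo_ae_eq_Ioc] at hdiff ⊢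
    filter_upwards [hdiff, ae_restrict_mem measurableSet_Ioo] with t hdiff_t ht
    have ht' := Ioo_subset_Icc_self ht
    exact deriv_mem_of_tendsto_primitive hi hY (Ioo_subset_Ico_self ht) (hconv t ht')
      (hcompact t ht').isClosed (hG t ht') hdiff_t
  obtain ⟨g, hg, hgG⟩ := exists_eventuallyEq_forall_mem hne hderiv
  refine ⟨g, (intervalIntegrable_deriv_of_lipschitzOnWith (hlip hb)).congr_ae hg, hgG,
    fun τ hτ ↦ ?_⟩
  have hYa : Y a = 0 := tendsto_nhds_unique (hY a ha) (by simp)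
  have hgτ : deriv Y =ᵐ[volume.restrict (uIoc a τ)] g := by
    rw [uIoc_of_le hab] at hg
    rw [uIoc_of_le hτ.1]
    exact ae_restrict_of_ae_restrict_of_subset (Ioc_subset_Ioc_right hτ.2) hg
  rw [← intervalIntegral.integral_congr_ae_restrict hgτ,
    integral_deriv_eq_sub_of_lipschitzOnWith (hlip hτ), hYa, sub_zero]

end LimitOfPrimitives

theorem upperHemicontinuous_of_isClosed_graph {X Y : Type*} [TopologicalSpace X]
    [FirstCountableTopology X] [PseudoMetricSpace Y] [ProperSpace Y] {F : X → Set Y}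
    (hgraph : IsClosed {p : X × Y | p.2 ∈ F p.1})
    (hbdd : ∀ x, ∃ s, Bornology.IsBounded s ∧ ∀ᶠ x' in 𝓝 x, F x' ⊆ s) :
    UpperHemicontinuous F := by
  intro x
  obtain ⟨s, hs, hFs⟩ := hbdd x
  refine UpperHemicontinuousAt.of_sequences hs.isCompact_closure.isSeqCompact
    (hFs.mono fun _ h ↦ h.trans subset_closure) fun u hu v hv v₀ hv₀ ↦ ?_
  exact hgraph.mem_of_tendsto (hu.prodMk_nhds hv₀) (Eventually.of_forall hv)

theorem IsStandardSVM.upperHemicontinuous {m : ℕ} {F : Euc m → Set (Euc m)}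
    (hF : IsStandardSVM F) : UpperHemicontinuous F := by
  obtain ⟨-, hgraph, c, hc, hgrowth⟩ := hF
  refine upperHemicontinuous_of_isClosed_graph hgraph fun x ↦
    ⟨closedBall 0 (c * (1 + (‖x‖ + 1))), isBounded_closedBall, ?_⟩
  filter_upwards [continuous_norm.continuousAt.eventually_lt_const (lt_add_one ‖x‖)]
    with x' hx' y hy
  rw [mem_closedBall_zero_iff]
  exact (hgrowth x' y hy).trans (by gcongr)

section Fdelta

variable {m : ℕ} {F : Euc m → Set (Euc m)}

@[simp]
theorem Fdelta_zero (x : Euc m) : Fdelta F 0 x = F x := if_pos rfl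

theorem exists_dist_lt_of_mem_Fdelta (hne : ∀ x, (F x).Nonempty) {δ η : ℝ} (hδ : 0 ≤ δ)
    (hδη : δ < η) {x y : Euc m} (hy : y ∈ Fdelta F δ x) :
    ∃ w, dist w x < η ∧ ∃ p ∈ F w, dist y p < η := by
  obtain rfl | hδ' := eq_or_ne δ 0
  · exact ⟨x, by simpa using hδη, y, by simpa using hy, by simpa using hδη⟩
  · rw [Fdelta, if_neg hδ'] at hy
    obtain ⟨w, hwx, hyw⟩ := hy
    obtain ⟨p, hp, hyp⟩ := (infDist_lt_iff (hne w)).1 hyw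
    exact ⟨w, hwx.trans hδη, p, hp, hyp.trans hδη⟩

theorem tendsto_Fdelta_smallSets_nhdsSet (hne : ∀ x, (F x).Nonempty) {x : Euc m}
    (hcompact : IsCompact (F x)) (hF : UpperHemicontinuousAt F x) :
    Tendsto (fun p : Euc m × ℝ ↦ Fdelta F p.2 p.1) (𝓝 x ×ˢ 𝓝[≥] 0) (𝓝ˢ (F x)).smallSets := by
  refine tendsto_smallSets_iff.2 fun U hU ↦ ?_
  obtain ⟨ε, hε, hεU⟩ := (hasBasis_nhdsSet_thickening hcompact).mem_iff.1 hU
  obtain ⟨η, hη, hFη⟩ := Metric.eventually_nhds_iff.1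
    (hF.forall_isOpen _ isOpen_thickening (self_subset_thickening (half_pos hε) (F x)))
  have hρ : 0 < min (η / 2) (ε / 2) := lt_min (half_pos hη) (half_pos hε)
  filter_upwards [prod_mem_prod (ball_mem_nhds x (half_pos hη)) (Ico_mem_nhdsGE hρ)]
  rintro ⟨x', δ⟩ ⟨hx', hδ₀, hδρ⟩ y hy
  obtain ⟨w, hwx', p, hpw, hyp⟩ := exists_dist_lt_of_mem_Fdelta hne hδ₀ hδρ hy
  have hwx : dist w x < η := by
    linarith [dist_triangle w x' x, mem_ball.1 hx', lt_min_iff.1 hwx']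
  obtain ⟨q, hq, hpq⟩ := mem_thickening_iff.1 (hFη hwx hpw)
  refine hεU (mem_thickening_iff.2 ⟨q, hq, ?_⟩)
  linarith [dist_triangle y p q, lt_min_iff.1 hyp]

theorem tendsto_nhdsSet_of_mem_Fdelta
    (hne : ∀ x, (F x).Nonempty) (hcompact : ∀ x, IsCompact (F x)) (hF : UpperHemicontinuous F)
    {ι : Type*} {l : Filter ι} {a b : ℝ} (hab : a ≤ b) {z : C(Icc a b, Euc m)}
    {zn : ι → C(Icc a b, Euc m)} (hz : Tendsto zn l (𝓝 z)) {δn : ι → ℝ}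
    (hδ : Tendsto δn l (𝓝[≥] 0)) {h : ι → ℝ → Euc m}
    (hh : ∀ n, ∀ u : Icc a b, h n u ∈ Fdelta F (δn n) (zn n u)) (t : ℝ) :
    Tendsto (Function.uncurry h) (l ×ˢ 𝓝[Icc a b] t) (𝓝ˢ (F (IccExtend hab z t))) := by
  have hzt : Tendsto (fun p : ι × ℝ ↦ IccExtend hab (zn p.1) p.2) (l ×ˢ 𝓝[Icc a b] t)
      (𝓝 (IccExtend hab z t)) :=
    (hz.comp tendsto_fst).eval
      ((continuous_projIcc.continuousWithinAt.tendsto (x := t)).comp tendsto_snd)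
  refine Tendsto.of_smallSets ((tendsto_Fdelta_smallSets_nhdsSet hne (hcompact _) (hF _)).comp
    (hzt.prodMk (hδ.comp tendsto_fst))) ?_
  filter_upwards [tendsto_snd.eventually_mem self_mem_nhdsWithin] with p hp
  simpa only [Function.comp_apply, Function.uncurry, IccExtend_of_mem hab _ hp] using
    hh p.1 ⟨p.2, hp⟩

end Fdelta

theorem limsup_LambdaD_subset_general
    {m : ℕ} {F : Euc m → Set (Euc m)} (hne : ∀ x, (F x).Nonempty)
    (hcompact : ∀ x, IsCompact (F x)) (hconv : ∀ x, Convex ℝ (F x)) (hF : UpperHemicontinuous F)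
    {T : ℝ} (hT : 0 ≤ T) {z : C(Icc (0 : ℝ) T, Euc m)} {zn : ℕ → C(Icc (0 : ℝ) T, Euc m)}
    (hz : Tendsto zn atTop (𝓝 z)) {δn : ℕ → ℝ} (hδ : Tendsto δn atTop (𝓝[≥] 0)) :
    setLimsup (fun n ↦ LambdaD F T hT (δn n) (zn n)) ⊆ LambdaD F T hT 0 z := by
  intro y hy
  obtain ⟨φ, w, hφ, hw, hwΛ⟩ := exists_seq_tendsto_of_mem_setLimsup hy
  choose h hi hmem hint using hwΛ
  have hzφ := hz.comp hφ
  have hprim : ∀ τ ∈ Icc 0 T, Tendsto (fun k ↦ ∫ u in 0..τ, h k u) atTop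
      (𝓝 (IccExtend hT y τ - z ⟨0, left_mem_Icc.2 hT⟩)) := fun τ hτ ↦ by
    rw [IccExtend_of_mem hT y hτ]
    refine ((hw.eval_const ⟨τ, hτ⟩).sub (hzφ.eval_const ⟨0, left_mem_Icc.2 hT⟩)).congr fun k ↦ ?_
    rw [hint k ⟨τ, hτ⟩, Function.comp_apply, add_sub_cancel_left]
  obtain ⟨g, hgi, hgF, hg⟩ := exists_selection_eq_integral_of_tendsto_primitive hT
    (fun t _ ↦ hne (IccExtend hT z t)) (fun t _ ↦ hcompact _) (fun t _ ↦ hconv _) hi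
    hprim fun t _ ↦ tendsto_nhdsSet_of_mem_Fdelta hne hcompact hF hT hzφ (hδ.comp hφ) hmem t
  refine ⟨g, hgi, fun u ↦ ?_, fun τ ↦ ?_⟩
  · simpa only [Fdelta_zero, IccExtend_val] using hgF u u.2
  · rw [← hg τ τ.2, IccExtend_val, add_sub_cancel]

/-- (Corollary `limsuplambdadelta`.) If `z_n → z` uniformly on
`[0,T]` and `δ_n > 0` with `δ_n → 0`, then `limsup_n Λ^{δ_n}(z_n) ⊆ Λ(z)` for a
bounded standard set-valued map `F`. -/
theorem limsup_LambdaD_subset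
    {m : ℕ} (F : Euc m → Set (Euc m)) (hF : IsStandardSVM F)
    (hFbdd : ∃ B : ℝ, ∀ x, ∀ y ∈ F x, ‖y‖ ≤ B)
    (T : ℝ) (hT : 0 < T)
    (z : C(Icc (0:ℝ) T, Euc m)) (zn : ℕ → C(Icc (0:ℝ) T, Euc m))
    (hz : Tendsto zn atTop (𝓝 z))
    (δn : ℕ → ℝ) (hδpos : ∀ n, 0 < δn n) (hδ0 : Tendsto δn atTop (𝓝 0)) :
    setLimsup (fun n => LambdaD F T hT.le (δn n) (zn n)) ⊆ LambdaD F T hT.le 0 z := by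
  exact limsup_LambdaD_subset_general (fun x ↦ (hF.1 x).1) (fun x ↦ (hF.1 x).2.1)
    (fun x ↦ (hF.1 x).2.2) hF.upperHemicontinuous hT.le hz
    (tendsto_nhdsWithin_iff.2 ⟨hδ0, Eventually.of_forall fun n ↦ (hδpos n).le⟩)
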